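/- arXiv:1211.3212 — 3 statements merged into one kernel-verified Lean document; each statement's English description precedes it below -/
import Mathlib

section
/- Let a < b be reals, let L > 0, and let f : [a, b] → ℝ be a differentiable increasing function with f′(x) ≥ L for all x ∈ [a, b]. Let a = x_0 < x_1 < ⋯ < x_c = b be any partition of [a, b] into c subintervals. Then the left Riemann sum satisfies Σ_{j=0}^{c−1} f(x_j)(x_{j+1} − x_j) ≤ ∫_a^b f(x) dx − L(b − a)²/(2c). -/
open MeasureTheory Finset

/-!
Since `f' ≥ L`, the function `g t = f t - L * t` is monotone, so its left Riemann sum is at most its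
integral. For the remaining linear part the error of the left Riemann sum is exactly
`L / 2 * ∑ (x (j + 1) - x j) ^ 2`, and by Cauchy–Schwarz the sum of the squares of `c` steps of
total length `b - a` is at least `(b - a) ^ 2 / c`.
-/

theorem monotoneOn_sub_mul_of_le_hasDerivWithinAt {D : Set ℝ} (hD : Convex ℝ D) {f f' : ℝ → ℝ}
    {L : ℝ} (hderiv : ∀ y ∈ D, HasDerivWithinAt f (f' y) D y) (hf' : ∀ y ∈ D, L ≤ f' y) :
    MonotoneOn (fun t ↦ f t - L * t) D := by
  have hg : ∀ y ∈ D, HasDerivWithinAt (fun t ↦ f t - L * t) (f' y - L) D y := fun y hy ↦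
    (hderiv y hy).fun_sub (by simpa using (hasDerivWithinAt_id y D).const_mul L)
  exact monotoneOn_of_hasDerivWithinAt_nonneg hD (fun y hy ↦ (hg y hy).continuousWithinAt)
    (fun y hy ↦ (hg y (interior_subset hy)).mono interior_subset)
    fun y hy ↦ sub_nonneg.2 (hf' y (interior_subset hy))

theorem mul_sub_le_integral_of_monotoneOn {g : ℝ → ℝ} {u v : ℝ} (huv : u ≤ v)
    (hg : MonotoneOn g (Set.Icc u v)) :
    g u * (v - u) ≤ ∫ t in u..v, g t := by
  have hint : IntervalIntegrable g volume u v :=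
    MonotoneOn.intervalIntegrable (by rwa [Set.uIcc_of_le huv])
  calc
    g u * (v - u) = ∫ _ in u..v, g u := by
      rw [intervalIntegral.integral_const, smul_eq_mul, mul_comm]
    _ ≤ ∫ t in u..v, g t :=
      intervalIntegral.integral_mono_on huv intervalIntegrable_const hint
        fun t ht ↦ hg (Set.left_mem_Icc.2 huv) ht ht.1

theorem sum_mul_sub_le_integral_of_monotoneOn {g : ℝ → ℝ} {c : ℕ} {x : ℕ → ℝ}
    (hx : MonotoneOn x (Set.Iic c)) (hg : MonotoneOn g (Set.Icc (x 0) (x c))) :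
    ∑ j ∈ range c, g (x j) * (x (j + 1) - x j) ≤ ∫ t in x 0..x c, g t := by
  have hstep : ∀ j < c, x j ≤ x (j + 1) := fun j hj ↦ hx hj.le hj j.le_succ
  have hgstep : ∀ j < c, MonotoneOn g (Set.Icc (x j) (x (j + 1))) := fun j hj ↦
    hg.mono (Set.Icc_subset_Icc (hx c.zero_le hj.le j.zero_le) (hx hj Set.self_mem_Iic hj))
  have hint : ∀ j < c, IntervalIntegrable g volume (x j) (x (j + 1)) := fun j hj ↦
    MonotoneOn.intervalIntegrable (by simpa only [Set.uIcc_of_le (hstep j hj)] using hgstep j hj)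
  rw [← intervalIntegral.sum_integral_adjacent_intervals hint]
  exact sum_le_sum fun j hj ↦
    have hjc := mem_range.1 hj
    mul_sub_le_integral_of_monotoneOn (hstep j hjc) (hgstep j hjc)

theorem two_mul_sum_mul_sub {R : Type*} [CommRing R] (x : ℕ → R) (c : ℕ) :
    2 * ∑ j ∈ range c, x j * (x (j + 1) - x j) =
      x c ^ 2 - x 0 ^ 2 - ∑ j ∈ range c, (x (j + 1) - x j) ^ 2 := by
  rw [← sum_range_sub (fun j ↦ x j ^ 2), mul_sum, ← sum_sub_distrib]
  exact sum_congr rfl fun j _ ↦ by ring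

theorem sub_sq_div_le_sum_sub_sq {K : Type*} [Field K] [LinearOrder K] [IsStrictOrderedRing K]
    (x : ℕ → K) {c : ℕ} (hc : 0 < c) :
    (x c - x 0) ^ 2 / c ≤ ∑ j ∈ range c, (x (j + 1) - x j) ^ 2 := by
  rw [div_le_iff₀' (Nat.cast_pos.2 hc)]
  simpa only [sum_range_sub, card_range] using
    sq_sum_le_card_mul_sum_sq (s := range c) (f := fun j ↦ x (j + 1) - x j)

theorem sum_mul_sub_add_le_integral {f : ℝ → ℝ} {L : ℝ} {c : ℕ} {x : ℕ → ℝ}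
    (hx : MonotoneOn x (Set.Iic c))
    (hf : MonotoneOn (fun t ↦ f t - L * t) (Set.Icc (x 0) (x c))) :
    ∑ j ∈ range c, f (x j) * (x (j + 1) - x j) +
        L / 2 * ∑ j ∈ range c, (x (j + 1) - x j) ^ 2 ≤ ∫ t in x 0..x c, f t := by
  have hx0c : x 0 ≤ x c := hx c.zero_le Set.self_mem_Iic c.zero_le
  have hint : IntervalIntegrable (fun t ↦ f t - L * t) volume (x 0) (x c) :=
    MonotoneOn.intervalIntegrable (by rwa [Set.uIcc_of_le hx0c])
  have hlin : IntervalIntegrable (fun t ↦ L * t) volume (x 0) (x c) :=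
    Continuous.intervalIntegrable (by fun_prop) _ _
  have hintegral : ∫ t in x 0..x c, f t =
      (∫ t in x 0..x c, (f t - L * t)) + L * ((x c ^ 2 - x 0 ^ 2) / 2) := by
    rw [← integral_id, ← intervalIntegral.integral_const_mul,
      ← intervalIntegral.integral_add hint hlin]
    simp only [sub_add_cancel]
  have hsum : ∑ j ∈ range c, f (x j) * (x (j + 1) - x j) =
      ∑ j ∈ range c, (f (x j) - L * x j) * (x (j + 1) - x j) +
        L * ∑ j ∈ range c, x j * (x (j + 1) - x j) := by
    rw [mul_sum, ← sum_add_distrib]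
    exact sum_congr rfl fun j _ ↦ by ring
  linear_combination sum_mul_sub_le_integral_of_monotoneOn hx hf + hsum - hintegral +
    L / 2 * two_mul_sum_mul_sub x c

theorem left_riemann_sum_le_general {a b L : ℝ} (hL : 0 ≤ L) {f : ℝ → ℝ}
    (hf : MonotoneOn (fun t ↦ f t - L * t) (Set.Icc a b))
    {c : ℕ} (hc : 0 < c) {x : ℕ → ℝ} (hx0 : x 0 = a) (hxc : x c = b)
    (hx : MonotoneOn x (Set.Iic c)) :
    ∑ j ∈ range c, f (x j) * (x (j + 1) - x j) ≤
      (∫ t in a..b, f t) - L * (b - a) ^ 2 / (2 * c) := by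
  subst hx0 hxc
  rw [le_sub_iff_add_le]
  calc
    _ = ∑ j ∈ range c, f (x j) * (x (j + 1) - x j) + L / 2 * ((x c - x 0) ^ 2 / c) := by
      rw [div_mul_div_comm]
    _ ≤ ∑ j ∈ range c, f (x j) * (x (j + 1) - x j) +
        L / 2 * ∑ j ∈ range c, (x (j + 1) - x j) ^ 2 := by
      gcongr
      exact sub_sq_div_le_sum_sub_sq x hc
    _ ≤ ∫ t in x 0..x c, f t := sum_mul_sub_add_le_integral hx hf

/-- **Left Riemann sums of a function with derivative bounded below.**
Let `f : [a,b] → ℝ` be differentiable and increasing with `f'(x) ≥ L > 0` on `[a,b]`.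
For any partition `a = x_0 < x_1 < ⋯ < x_c = b`, the left Riemann sum satisfies
`Σ_{j<c} f(x_j)(x_{j+1} − x_j) ≤ ∫_a^b f − L(b−a)²/(2c)`. -/
theorem left_riemann_sum_le
    (a b L : ℝ) (hab : a < b) (hL : 0 < L)
    (f f' : ℝ → ℝ)
    (hderiv : ∀ y ∈ Set.Icc a b, HasDerivWithinAt f (f' y) (Set.Icc a b) y)
    (hf' : ∀ y ∈ Set.Icc a b, L ≤ f' y)
    (hmono : MonotoneOn f (Set.Icc a b))
    (c : ℕ) (hc : 0 < c) (x : ℕ → ℝ)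
    (hx0 : x 0 = a) (hxc : x c = b)
    (hxlt : ∀ j < c, x j < x (j + 1)) :
    ∑ j ∈ Finset.range c, f (x j) * (x (j + 1) - x j) ≤
      (∫ t in a..b, f t) - L * (b - a) ^ 2 / (2 * c) := by
  exact left_riemann_sum_le_general hL.le
    (monotoneOn_sub_mul_of_le_hasDerivWithinAt (convex_Icc a b) hderiv hf') hc hx0 hxc
    (monotoneOn_of_le_succ Set.ordConnected_Iic fun j _ _ hj ↦ (hxlt j hj).le)
end

section
/- Let η > 0 and define w : ℝ → [0, 1] by w(x) = 0 for x ≤ −η, w(x) = (1/2)(1 + x/η)² for −η ≤ x ≤ 0, w(x) = 1 − (1/2)(1 − x/η)² for 0 ≤ x ≤ η, and w(x) = 1 for x ≥ η. Then ∫_{−η/2}^{η/2} w(x) dx = η/2, and for any partition −η/2 = x_0 < x_1 < ⋯ < x_c = η/2 of [−η/2, η/2] into c subintervals, Σ_{j=0}^{c−1} w(x_j)(x_{j+1} − x_j) ≤ η/2 − η/(4c). -/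
open MeasureTheory Finset

/-- The probability that FPL with uniform noise on `[0,η]²` chooses expert 1 when the
cumulative payoff of expert 1 exceeds that of expert 2 by `x`. -/
noncomputable def fplWeight (η x : ℝ) : ℝ :=
  if x ≤ -η then 0
  else if x ≤ 0 then (1 / 2) * (1 + x / η) ^ 2
  else if x ≤ η then 1 - (1 / 2) * (1 - x / η) ^ 2
  else 1

/-!
If `f - m • id` is monotone on `[a, b]`, then `f t ≥ f a + m (t - a)` there, and integrating shows
that the left endpoint rule loses at least `m (b - a)² / 2`. Over a partition into `c` pieces the
losses add up to `(m / 2) ∑ Δⱼ²`, which by Cauchy–Schwarz is at least `m (b - a)² / (2 c)`.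

For `|x| ≤ η` the weight is `w x = 1/2 + x / η - x |x| / (2 η²)`. Thus `w - 1/2` is odd, which gives
the integral over `[-r, r]`, and `|b| b - |a| a ≤ (b - a) (|a| + |b|)` gives the slope
`m = (η - r) / η²` on `[-r, r]`; at `r = η / 2` this is `m = 1 / (2 η)`.
-/

theorem sq_sub_le_mul_sum_sq_sub {R : Type*} [CommRing R] [LinearOrder R] [IsStrictOrderedRing R]
    (x : ℕ → R) (c : ℕ) :
    (x c - x 0) ^ 2 ≤ c * ∑ j ∈ range c, (x (j + 1) - x j) ^ 2 := by
  simpa only [sum_range_sub, card_range] using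
    sq_sum_le_card_mul_sum_sq (s := range c) (f := fun j ↦ x (j + 1) - x j)

section LeftRiemannSum

variable {f : ℝ → ℝ} {m : ℝ}

theorem intervalIntegrable_of_monotoneOn_sub_mul {a b : ℝ} (hab : a ≤ b)
    (hf : MonotoneOn (fun t ↦ f t - m * t) (Set.Icc a b)) :
    IntervalIntegrable f volume a b := by
  have hsub : IntervalIntegrable (fun t ↦ f t - m * t) volume a b :=
    MonotoneOn.intervalIntegrable (by rwa [Set.uIcc_of_le hab])
  have hlin : IntervalIntegrable (fun t ↦ m * t) volume a b :=
    (continuous_const.mul continuous_id).intervalIntegrable a b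
  simpa using hsub.add hlin

theorem integral_const_add_mul_sub (y m a b : ℝ) :
    ∫ t in a..b, (y + m * (t - a)) = y * (b - a) + m / 2 * (b - a) ^ 2 := by
  have hlin : IntervalIntegrable (fun t ↦ m * (t - a)) volume a b :=
    Continuous.intervalIntegrable (by fun_prop) a b
  rw [intervalIntegral.integral_add intervalIntegrable_const hlin,
    intervalIntegral.integral_const, intervalIntegral.integral_const_mul,
    intervalIntegral.integral_comp_sub_right (fun t ↦ t), integral_id, smul_eq_mul]
  ring

theorem mul_sub_add_half_mul_sq_le_integral {a b : ℝ} (hab : a ≤ b)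
    (hf : MonotoneOn (fun t ↦ f t - m * t) (Set.Icc a b)) :
    f a * (b - a) + m / 2 * (b - a) ^ 2 ≤ ∫ t in a..b, f t := by
  rw [← integral_const_add_mul_sub]
  refine intervalIntegral.integral_mono_on hab (Continuous.intervalIntegrable (by fun_prop) a b)
    (intervalIntegrable_of_monotoneOn_sub_mul hab hf) fun t ht ↦ ?_
  linarith [hf (Set.left_mem_Icc.2 hab) ht ht.1]

variable {x : ℕ → ℝ} {c : ℕ}

theorem sum_mul_sub_add_half_mul_sum_sq_le_integral (hx : MonotoneOn x (Set.Iic c))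
    (hf : MonotoneOn (fun t ↦ f t - m * t) (Set.Icc (x 0) (x c))) :
    ∑ j ∈ range c, f (x j) * (x (j + 1) - x j) + m / 2 * ∑ j ∈ range c, (x (j + 1) - x j) ^ 2 ≤
      ∫ t in x 0..x c, f t := by
  have hstep (j : ℕ) (hj : j < c) : x j ≤ x (j + 1) := hx hj.le hj j.le_succ
  have hf_step (j : ℕ) (hj : j < c) :
      MonotoneOn (fun t ↦ f t - m * t) (Set.Icc (x j) (x (j + 1))) :=
    hf.mono <| Set.Icc_subset_Icc (hx c.zero_le hj.le j.zero_le) (hx hj Set.self_mem_Iic hj)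
  rw [mul_sum, ← sum_add_distrib, ← intervalIntegral.sum_integral_adjacent_intervals fun j hj ↦
    intervalIntegrable_of_monotoneOn_sub_mul (hstep j hj) (hf_step j hj)]
  refine sum_le_sum fun j hj ↦ ?_
  rw [mem_range] at hj
  exact mul_sub_add_half_mul_sq_le_integral (hstep j hj) (hf_step j hj)

theorem sum_mul_sub_le_integral_sub (hm : 0 ≤ m) (hc : 0 < c) (hx : MonotoneOn x (Set.Iic c))
    (hf : MonotoneOn (fun t ↦ f t - m * t) (Set.Icc (x 0) (x c))) :
    ∑ j ∈ range c, f (x j) * (x (j + 1) - x j) ≤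
      (∫ t in x 0..x c, f t) - m * (x c - x 0) ^ 2 / (2 * c) := by
  have hsq : (x c - x 0) ^ 2 / c ≤ ∑ j ∈ range c, (x (j + 1) - x j) ^ 2 :=
    (div_le_iff₀' (Nat.cast_pos.2 hc)).2 (sq_sub_le_mul_sum_sq_sub x c)
  calc ∑ j ∈ range c, f (x j) * (x (j + 1) - x j)
    _ ≤ (∫ t in x 0..x c, f t) - m / 2 * ∑ j ∈ range c, (x (j + 1) - x j) ^ 2 :=
      le_sub_iff_add_le.2 (sum_mul_sub_add_half_mul_sum_sq_le_integral hx hf)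
    _ ≤ (∫ t in x 0..x c, f t) - m / 2 * ((x c - x 0) ^ 2 / c) := by gcongr
    _ = (∫ t in x 0..x c, f t) - m * (x c - x 0) ^ 2 / (2 * c) := by rw [div_mul_div_comm]

end LeftRiemannSum

theorem integral_neg_self_eq_zero_of_odd {E : Type*} [NormedAddCommGroup E] [NormedSpace ℝ E]
    {f : ℝ → E} (hf : Function.Odd f) (r : ℝ) : ∫ x in -r..r, f x = 0 := by
  have hneg : ∫ x in -r..r, f x = -∫ x in -r..r, f x := calc
    ∫ x in -r..r, f x = ∫ x in -r..r, f (-x) := by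
      rw [intervalIntegral.integral_comp_neg, neg_neg]
    _ = -∫ x in -r..r, f x := by simp only [hf _, intervalIntegral.integral_neg]
  have : IsAddTorsionFree E := .of_isTorsionFree ℝ E
  exact self_eq_neg.1 hneg

theorem mul_abs_sub_mul_abs_le {R : Type*} [CommRing R] [LinearOrder R] [IsStrictOrderedRing R]
    {a b : R} (hab : a ≤ b) :
    b * |b| - a * |a| ≤ (b - a) * (|a| + |b|) := by
  have h : a * (|b| - |a|) ≤ |a| * (b - a) := calc
    a * (|b| - |a|) ≤ |a| * |(|b| - |a|)| := (le_abs_self _).trans_eq (abs_mul _ _)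
    _ ≤ |a| * |b - a| := mul_le_mul_of_nonneg_left (abs_abs_sub_abs_le b a) (abs_nonneg a)
    _ = |a| * (b - a) := by rw [abs_of_nonneg (sub_nonneg.2 hab)]
  linarith

section FPLWeight

variable {η r : ℝ}

theorem fplWeight_of_abs_le {x : ℝ} (hη : 0 < η) (hx : |x| ≤ η) :
    fplWeight η x = 1 / 2 + (x / η - x * |x| / (2 * η ^ 2)) := by
  obtain ⟨hx_left, hx_right⟩ := abs_le.1 hx
  unfold fplWeight
  split_ifs with hleft hneg
  · obtain rfl : x = -η := hleft.antisymm hx_left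
    rw [abs_neg, abs_of_pos hη]
    field_simp
    ring
  · rw [abs_of_nonpos hneg]
    field_simp
    ring
  · rw [abs_of_pos (not_le.1 hneg)]
    field_simp
    ring

theorem integral_fplWeight_neg_self (hη : 0 < η) (hr : |r| ≤ η) :
    ∫ x in -r..r, fplWeight η x = r := by
  have hodd : Function.Odd fun x : ℝ ↦ x / η - x * |x| / (2 * η ^ 2) := fun x ↦ by
    simp only [abs_neg]
    ring
  have hformula : Set.EqOn (fplWeight η) (fun x ↦ 1 / 2 + (x / η - x * |x| / (2 * η ^ 2)))
      (Set.uIcc (-r) r) := fun x hx ↦ by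
    refine fplWeight_of_abs_le hη ((abs_le.2 ?_).trans hr)
    rw [Set.mem_uIcc] at hx
    grind
  rw [intervalIntegral.integral_congr hformula,
    intervalIntegral.integral_add intervalIntegrable_const
      (Continuous.intervalIntegrable (by fun_prop) _ _),
    integral_neg_self_eq_zero_of_odd hodd, intervalIntegral.integral_const, smul_eq_mul]
  ring

theorem monotoneOn_fplWeight_sub_mul (hη : 0 < η) (hr : r ≤ η) :
    MonotoneOn (fun x ↦ fplWeight η x - (η - r) / η ^ 2 * x) (Set.Icc (-r) r) := by
  intro a ha b hb hab
  have ha' : |a| ≤ r := abs_le.2 ha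
  have hb' : |b| ≤ r := abs_le.2 hb
  have hquad : b * |b| - a * |a| ≤ (b - a) * (2 * r) := calc
    b * |b| - a * |a| ≤ (b - a) * (|a| + |b|) := mul_abs_sub_mul_abs_le hab
    _ ≤ (b - a) * (2 * r) := by
      rw [two_mul]
      gcongr
  have hdiff : fplWeight η b - (η - r) / η ^ 2 * b - (fplWeight η a - (η - r) / η ^ 2 * a) =
      ((b - a) * (2 * r) - (b * |b| - a * |a|)) / (2 * η ^ 2) := by
    rw [fplWeight_of_abs_le hη (ha'.trans hr), fplWeight_of_abs_le hη (hb'.trans hr)]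
    field_simp
    ring
  refine sub_nonneg.1 (hdiff ▸ ?_)
  exact div_nonneg (sub_nonneg.2 hquad) (by positivity)

theorem fplWeight_integral_and_riemann_sum_general (hη : 0 < η) (hr : |r| ≤ η) :
    (∫ x in -r..r, fplWeight η x) = r ∧
    ∀ c : ℕ, 0 < c → ∀ x : ℕ → ℝ, x 0 = -r → x c = r → MonotoneOn x (Set.Iic c) →
      ∑ j ∈ range c, fplWeight η (x j) * (x (j + 1) - x j) ≤
        r - 2 * (η - r) * r ^ 2 / (η ^ 2 * c) := by
  have hr' : r ≤ η := (le_abs_self r).trans hr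
  refine ⟨integral_fplWeight_neg_self hη hr, fun c hc x hx₀ hx_last hx ↦ ?_⟩
  have hslope : 0 ≤ (η - r) / η ^ 2 := div_nonneg (sub_nonneg.2 hr') (sq_nonneg η)
  have hsum := sum_mul_sub_le_integral_sub (f := fplWeight η) hslope hc hx
    (by rw [hx₀, hx_last]; exact monotoneOn_fplWeight_sub_mul hη hr')
  rw [hx₀, hx_last, integral_fplWeight_neg_self hη hr] at hsum
  convert hsum using 2
  field_simp
  ring

end FPLWeight

/-- **Integral and left Riemann sums of the FPL weight function.**
For `η > 0`, `∫_{−η/2}^{η/2} w(x) dx = η/2`, and for any partition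
`−η/2 = x_0 < x_1 < ⋯ < x_c = η/2`, the left Riemann sum of `w = fplWeight η` satisfies
`Σ_{j<c} w(x_j)(x_{j+1} − x_j) ≤ η/2 − η/(4c)`. -/
theorem fplWeight_integral_and_riemann_sum (η : ℝ) (hη : 0 < η) :
    (∫ x in (-(η / 2))..(η / 2), fplWeight η x) = η / 2 ∧
    ∀ (c : ℕ), 0 < c → ∀ x : ℕ → ℝ, x 0 = -(η / 2) → x c = η / 2 →
      (∀ j < c, x j < x (j + 1)) →
      ∑ j ∈ Finset.range c, fplWeight η (x j) * (x (j + 1) - x j) ≤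
        η / 2 - η / (4 * c) := by
  obtain ⟨hint, hsum⟩ := fplWeight_integral_and_riemann_sum_general (r := η / 2) hη
    (by rw [abs_of_pos (half_pos hη)]; exact half_le_self hη.le)
  refine ⟨hint, fun c hc x hx₀ hx_last hx ↦ ?_⟩
  convert hsum c hc x hx₀ hx_last (strictMonoOn_Iic_of_lt_succ hx).monotoneOn using 2
  field_simp
  ring
end

section
/- Let ℓ and b be positive integers, T = bℓ, let p^1, …, p^T ∈ [0, 1]² be any fixed sequence of payoff vectors for two experts, set η = ℓ^{5/12}·T^{1/2}, η′ = √ℓ, q = 2ℓ³T²/η⁵, and assume q ≤ 1 (equivalently T ≥ 4ℓ^{11/6}). Then there is a universal constant C > 0, independent of ℓ, b, T and of the payoff sequence, such that the expected regret of DFPL(T, ℓ, η) satisfies E[ max_{a∈{1,2}} Σ_{t=1}^T p^t[a] − Σ_{t=1}^T p^t[a^t] ] ≤ C · ℓ^{5/12} · √T = C · √(ℓ^{5/6} T). -/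
open MeasureTheory ProbabilityTheory Finset

/-- The uniform probability measure on the interval `[0, η]`. -/
noncomputable def uniformIcc (η : ℝ) : Measure ℝ :=
  (ENNReal.ofReal η)⁻¹ • volume.restrict (Set.Icc 0 η)

/-- The uniform probability measure on the square `[0, η]²`. -/
noncomputable def uniformSq (η : ℝ) : Measure (Fin 2 → ℝ) :=
  Measure.pi fun _ => uniformIcc η

/-- The Bernoulli(q) measure on `Bool` (`true` with probability `q`). -/
noncomputable def bernoulliBool (q : ℝ) : Measure Bool :=
  ENNReal.ofReal q • Measure.dirac true + ENNReal.ofReal (1 - q) • Measure.dirac false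

/-- Sample space for DFPL with `b` blocks of length `ℓ`: a Bernoulli coin `Y_i` for each
block, a fresh uniform perturbation in `[0,η']²` for every time step of every block
(used in step phases), and a uniform perturbation in `[0,η]²` for each block (used in
block phases). -/
abbrev DFPLSpace (b ℓ : ℕ) : Type :=
  (Fin b → Bool) × ((Fin b × Fin ℓ) → (Fin 2 → ℝ)) × (Fin b → (Fin 2 → ℝ))

/-- The joint distribution of all the (mutually independent) random draws of DFPL. -/
noncomputable def DFPLMeasure (b ℓ : ℕ) (q η' η : ℝ) : Measure (DFPLSpace b ℓ) :=
  (Measure.pi fun _ : Fin b => bernoulliBool q).prod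
    ((Measure.pi fun _ : Fin b × Fin ℓ => uniformSq η').prod
      (Measure.pi fun _ : Fin b => uniformSq η))

/-!
Only the difference `δ` of the payoffs of the two experts matters. FPL with noise level `s` follows
the first expert with probability `triCDF (x / s)`, where `x` is the current sum of differences, and
`s * triPotential (x / s)` is a potential for this strategy: it dominates `x⁺`, equals `s / 6` at
`0`, and its derivative is the probability of following the first expert. Hence the regret of FPL is
at most `s / 6` plus the sum of the Taylor remainders.

At the level of blocks, the quadratic remainders would cost `ℓ ^ 2 / η` each. Up to its own regret
`O(√ℓ)`, a step phase performs as well as a clairvoyant who plays the better expert of the block,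
and whose advantage over FPL is at least proportional to the square of the second derivative of the
potential. By AM-GM, step phases of probability `q` therefore absorb the quadratic term at the price
of a cubic one, `ℓ ^ 3 / (q * η ^ 2)`. The parameters are chosen so that `b * ℓ ^ 3 / (q * η ^ 2)`
and `b * q * √ℓ` are both `O(η)`.
-/

/-- The triangular density on `[-1, 1]`: the density of the difference of two independent uniform
variables on `[0, 1]`. -/
noncomputable def triDensity (z : ℝ) : ℝ := (1 - |z|)⁺

/-- The distribution function of the triangular law, written as a second difference of `x⁺ ^ 2 / 2`.
At `(x - y) / η` it is the probability that FPL with noise level `η` prefers an expert with payoff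
`x` to one with payoff `y`. -/
noncomputable def triCDF (z : ℝ) : ℝ := ((z + 1)⁺ ^ 2 - 2 * z⁺ ^ 2 + (z - 1)⁺ ^ 2) / 2

/-- The potential function of FPL: the antiderivative of `triCDF` vanishing at `-∞`, that is, the
expectation of `(z + D)⁺` for a variable `D` with the triangular law. -/
noncomputable def triPotential (z : ℝ) : ℝ := ((z + 1)⁺ ^ 3 - 2 * z⁺ ^ 3 + (z - 1)⁺ ^ 3) / 6

section Potential

lemma hasDerivAt_posPart_pow (n : ℕ) (x : ℝ) :
    HasDerivAt (fun y : ℝ ↦ y⁺ ^ (n + 2)) ((n + 2 : ℝ) * x⁺ ^ (n + 1)) x := by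
  have hcont (k : ℕ) : Continuous fun y : ℝ ↦ y⁺ ^ k := continuous_posPart.pow k
  refine hasDerivAt_of_hasDerivAt_of_ne' (x := 0) (g := fun y ↦ (n + 2 : ℝ) * y⁺ ^ (n + 1))
    (fun y hy ↦ ?_) (hcont _).continuousAt (continuous_const.mul (hcont _)).continuousAt x
  rcases hy.lt_or_gt with hneg | hpos
  · refine ((hasDerivAt_const y (0 : ℝ)).congr_of_eventuallyEq ?_).congr_deriv ?_
    · filter_upwards [Iio_mem_nhds hneg] with u hu
      simp [posPart_of_nonpos (Set.mem_Iio.1 hu).le]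
    · simp [posPart_of_nonpos hneg.le]
  · refine ((hasDerivAt_pow (n + 2) y).congr_of_eventuallyEq ?_).congr_deriv ?_
    · filter_upwards [Ioi_mem_nhds hpos] with u hu
      rw [posPart_of_nonneg (Set.mem_Ioi.1 hu).le]
    · simp [posPart_of_nonneg hpos.le]

lemma posPart_cases (x : ℝ) : (0 ≤ x ∧ x⁺ = x) ∨ (x ≤ 0 ∧ x⁺ = 0) :=
  (le_total 0 x).imp (fun h ↦ ⟨h, posPart_of_nonneg h⟩) fun h ↦ ⟨h, posPart_of_nonpos h⟩

lemma posPart_div_of_pos {s : ℝ} (hs : 0 < s) (x : ℝ) : (x / s)⁺ = x⁺ / s := by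
  rw [posPart_def, posPart_def, ← max_div_div_right hs.le, zero_div]

lemma triDensity_eq_secondDifference (z : ℝ) :
    triDensity z = (z + 1)⁺ - 2 * z⁺ + (z - 1)⁺ := by
  rw [triDensity]
  rcases abs_cases z with ⟨ha, _⟩ | ⟨ha, _⟩ <;> rw [ha] <;>
    rcases posPart_cases (z + 1) with ⟨_, e₁⟩ | ⟨_, e₁⟩ <;>
    rcases posPart_cases z with ⟨_, e₂⟩ | ⟨_, e₂⟩ <;>
    rcases posPart_cases (z - 1) with ⟨_, e₃⟩ | ⟨_, e₃⟩ <;>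
    rcases posPart_cases (1 - z) with ⟨_, e₄⟩ | ⟨_, e₄⟩ <;>
    rcases posPart_cases (1 - -z) with ⟨_, e₅⟩ | ⟨_, e₅⟩ <;>
    simp only [e₁, e₂, e₃, e₄, e₅] <;> linarith

lemma hasDerivAt_triCDF (z : ℝ) : HasDerivAt triCDF (triDensity z) z := by
  have hsq (c : ℝ) : HasDerivAt (fun y ↦ (y + c)⁺ ^ 2) (2 * (z + c)⁺) z := by
    simpa using (hasDerivAt_posPart_pow 0 (z + c)).comp_add_const z c
  have hdiff := (((hsq 1).sub ((hsq 0).const_mul 2)).add (hsq (-1))).div_const 2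
  refine (hdiff.congr_deriv ?_).congr_of_eventuallyEq (.of_forall fun y ↦ ?_)
  · rw [triDensity_eq_secondDifference, add_zero, ← sub_eq_add_neg]; ring
  · simp [triCDF, sub_eq_add_neg]

lemma hasDerivAt_triPotential (z : ℝ) : HasDerivAt triPotential (triCDF z) z := by
  have hcube (c : ℝ) : HasDerivAt (fun y ↦ (y + c)⁺ ^ 3) (3 * (z + c)⁺ ^ 2) z := by
    simpa [show (1 + 2 : ℝ) = 3 by norm_num] using
      (hasDerivAt_posPart_pow 1 (z + c)).comp_add_const z c
  have hdiff := (((hcube 1).sub ((hcube 0).const_mul 2)).add (hcube (-1))).div_const 6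
  refine (hdiff.congr_deriv ?_).congr_of_eventuallyEq (.of_forall fun y ↦ ?_)
  · rw [triCDF, add_zero, ← sub_eq_add_neg]; ring
  · simp [triPotential, sub_eq_add_neg]

lemma abs_triDensity_le_one (z : ℝ) : |triDensity z| ≤ 1 := by
  rw [triDensity, abs_of_nonneg (posPart_nonneg _)]
  exact sup_le (by linarith [abs_nonneg z]) zero_le_one

lemma abs_triDensity_sub_le (x y : ℝ) : |triDensity x - triDensity y| ≤ |x - y| :=
  calc |triDensity x - triDensity y| ≤ |(1 - |x|) - (1 - |y|)| := abs_max_sub_max_le_abs _ _ _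
    _ = |(|y| - |x|)| := by rw [sub_sub_sub_cancel_left]
    _ ≤ |x - y| := by rw [abs_sub_comm x]; exact abs_abs_sub_abs_le _ _

lemma sq_triDensity_le_two_mul_triCDF (z : ℝ) : triDensity z ^ 2 ≤ 2 * triCDF z := by
  rw [triDensity_eq_secondDifference, triCDF]
  rcases posPart_cases (z + 1) with ⟨_, e₁⟩ | ⟨_, e₁⟩ <;>
    rcases posPart_cases z with ⟨_, e₂⟩ | ⟨_, e₂⟩ <;>
    rcases posPart_cases (z - 1) with ⟨_, e₃⟩ | ⟨_, e₃⟩ <;>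
    rw [e₁, e₂, e₃] <;> nlinarith

lemma triCDF_neg (z : ℝ) : triCDF (-z) = 1 - triCDF z := by
  have hsq (x : ℝ) : (-x)⁺ ^ 2 = x ^ 2 - x⁺ ^ 2 := by
    rcases posPart_cases x with ⟨h, e⟩ | ⟨h, e⟩
    · rw [e, posPart_of_nonpos (neg_nonpos.2 h)]; ring
    · rw [e, posPart_of_nonneg (neg_nonneg.2 h)]; ring
  have e₁ := hsq (z - 1)
  have e₂ := hsq (z + 1)
  rw [show -(z - 1) = -z + 1 by ring] at e₁
  rw [show -(z + 1) = -z - 1 by ring] at e₂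
  rw [triCDF, triCDF, e₁, hsq z, e₂]
  ring

lemma triDensity_neg (z : ℝ) : triDensity (-z) = triDensity z := by
  rw [triDensity, triDensity, abs_neg]

lemma triPotential_zero : triPotential 0 = 1 / 6 := by
  norm_num [triPotential, posPart_of_nonneg, posPart_of_nonpos]

lemma posPart_le_triPotential (z : ℝ) : z⁺ ≤ triPotential z := by
  rw [triPotential]
  rcases posPart_cases (z + 1) with ⟨h₁, e₁⟩ | ⟨h₁, e₁⟩ <;>
    rcases posPart_cases z with ⟨h₂, e₂⟩ | ⟨h₂, e₂⟩ <;>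
    rcases posPart_cases (z - 1) with ⟨h₃, e₃⟩ | ⟨h₃, e₃⟩ <;>
    rw [e₁, e₂, e₃] <;> try linarith [pow_nonneg h₁ 3]
  all_goals
    have hcube : 0 ≤ (1 - z) ^ 3 := pow_nonneg (by linarith) 3
    nlinarith

lemma abs_le_of_abs_deriv_le_pow {f f' : ℝ → ℝ} {C : ℝ} {n : ℕ}
    (hf : ∀ x, HasDerivAt f (f' x) x) (h0 : f 0 = 0) (hbound : ∀ x, |f' x| ≤ C * |x| ^ n) (x : ℝ) :
    |f x| ≤ C * |x| ^ (n + 1) / (n + 1) := by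
  have hpath (t : ℝ) : HasDerivAt (fun t ↦ f (t * x)) (f' (t * x) * x) t :=
    (hf (t * x)).comp t (hasDerivAt_mul_const x)
  have hmajorant (t : ℝ) : HasDerivAt (fun t ↦ C * |x| ^ (n + 1) * t ^ (n + 1) / (n + 1))
      (C * |x| ^ (n + 1) * t ^ n) t := by
    refine (((hasDerivAt_pow (n + 1) t).const_mul (C * |x| ^ (n + 1))).div_const
      (n + 1 : ℝ)).congr_deriv ?_
    push_cast
    field_simp
  have hspeed (t : ℝ) (ht : t ∈ Set.Ico 0 1) :
      ‖f' (t * x) * x‖ ≤ C * |x| ^ (n + 1) * t ^ n := by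
    rw [Real.norm_eq_abs, abs_mul]
    calc |f' (t * x)| * |x| ≤ C * |t * x| ^ n * |x| := by gcongr; exact hbound _
      _ = C * |x| ^ (n + 1) * t ^ n := by rw [abs_mul, abs_of_nonneg ht.1]; ring
  simpa using image_norm_le_of_norm_deriv_right_le_deriv_boundary
    (fun t _ ↦ (hpath t).continuousAt.continuousWithinAt) (fun t _ ↦ (hpath t).hasDerivWithinAt)
    (by simp [h0]) hmajorant hspeed (Set.right_mem_Icc.2 zero_le_one)

lemma abs_triCDF_add_sub_le (z h : ℝ) : |triCDF (z + h) - triCDF z| ≤ |h| := by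
  simpa using abs_le_of_abs_deriv_le_pow (C := 1) (n := 0)
    (fun x ↦ ((hasDerivAt_triCDF (z + x)).comp_const_add z x).sub_const (triCDF z))
    (by simp) (fun x ↦ by simpa using abs_triDensity_le_one (z + x)) h

lemma abs_triCDF_taylor_le (z h : ℝ) :
    |triCDF (z + h) - triCDF z - h * triDensity z| ≤ |h| ^ 2 / 2 := by
  simpa [one_add_one_eq_two] using abs_le_of_abs_deriv_le_pow (C := 1) (n := 1)
    (fun x ↦ (((hasDerivAt_triCDF (z + x)).comp_const_add z x).sub_const (triCDF z)).sub
      (hasDerivAt_mul_const (triDensity z)))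
    (by simp) (fun x ↦ by simpa using abs_triDensity_sub_le (z + x) z) h

lemma abs_triPotential_taylor_one_le (z h : ℝ) :
    |triPotential (z + h) - triPotential z - h * triCDF z| ≤ |h| ^ 2 / 2 := by
  simpa [one_add_one_eq_two] using abs_le_of_abs_deriv_le_pow (C := 1) (n := 1)
    (fun x ↦ (((hasDerivAt_triPotential (z + x)).comp_const_add z x).sub_const
      (triPotential z)).sub (hasDerivAt_mul_const (triCDF z)))
    (by simp) (fun x ↦ by simpa using abs_triCDF_add_sub_le z x) h

lemma abs_triPotential_taylor_two_le (z h : ℝ) :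
    |triPotential (z + h) - triPotential z - h * triCDF z - h ^ 2 / 2 * triDensity z|
      ≤ |h| ^ 3 / 6 := by
  have hquadratic (x : ℝ) : HasDerivAt (fun x ↦ x ^ 2 / 2 * triDensity z) (x * triDensity z) x :=
    (((hasDerivAt_pow 2 x).div_const 2).mul_const _).congr_deriv (by simp)
  have hremainder := abs_le_of_abs_deriv_le_pow (C := 1 / 2) (n := 2)
    (fun x ↦ ((((hasDerivAt_triPotential (z + x)).comp_const_add z x).sub_const
      (triPotential z)).sub (hasDerivAt_mul_const (triCDF z))).sub (hquadratic x))
    (by simp) (fun x ↦ (abs_triCDF_taylor_le z x).trans_eq (by ring)) h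
  refine hremainder.trans_eq ?_
  norm_num
  ring

/- Let `g = triDensity z`. FPL falls short of the clairvoyant gain `h⁺` by at least
`|h| * g ^ 2 / 2`, so replacing FPL by the clairvoyant with probability `q` pays for the
second-order term `h ^ 2 / 2 * g` up to `|h| ^ 3 / (8 * q)`, by AM-GM. -/
lemma triPotential_add_sub_le_mix {q : ℝ} (hq : 0 < q) (hq1 : q ≤ 1) (z h : ℝ) :
    triPotential (z + h) - triPotential z
      ≤ q * h⁺ + (1 - q) * (h * triCDF z) + |h| ^ 3 / (3 * q) := by
  have htaylor := (abs_le.1 (abs_triPotential_taylor_two_le z h)).2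
  have hshortfall : |h| * triDensity z ^ 2 / 2 ≤ h⁺ - h * triCDF z := by
    rcases le_total 0 h with hh | hh
    · have hupper := sq_triDensity_le_two_mul_triCDF (-z)
      rw [triDensity_neg, triCDF_neg] at hupper
      rw [abs_of_nonneg hh, posPart_of_nonneg hh]
      nlinarith
    · rw [abs_of_nonpos hh, posPart_of_nonpos hh]
      nlinarith [sq_triDensity_le_two_mul_triCDF z]
  have hamgm : h ^ 2 / 2 * triDensity z
      ≤ q * (|h| * triDensity z ^ 2 / 2) + |h| ^ 3 / (8 * q) := by
    have hsquare : 0 ≤ |h| * (|h| - 2 * q * triDensity z) ^ 2 / (8 * q) := by positivity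
    have hexpand : |h| * (|h| - 2 * q * triDensity z) ^ 2 / (8 * q) =
        q * (|h| * triDensity z ^ 2 / 2) + |h| ^ 3 / (8 * q) - |h| ^ 2 / 2 * triDensity z := by
      field_simp
      ring
    rw [sq_abs] at hexpand
    linarith
  have hcubic : |h| ^ 3 / 6 + |h| ^ 3 / (8 * q) ≤ |h| ^ 3 / (3 * q) := by
    rw [div_add_div _ _ (by norm_num) (by positivity), div_le_div_iff₀ (by positivity)
      (by positivity)]
    have hnonneg : 0 ≤ |h| ^ 3 * q := by positivity
    nlinarith [mul_le_mul_of_nonneg_left hq1 hnonneg]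
  linarith [mul_le_mul_of_nonneg_left hshortfall hq.le]

end Potential

section Deterministic

variable {d δ : ℕ → ℝ} {n b ℓ : ℕ} {c m q s η η' : ℝ}

/-- The probability with which DFPL with blocks of length `ℓ` follows the first expert at time `t`,
where `δ` is the sequence of payoff differences between the two experts and `t / ℓ * ℓ` is the
first time of the block of `t`. -/
noncomputable def dfplProb (ℓ : ℕ) (q η' η : ℝ) (δ : ℕ → ℝ) (t : ℕ) : ℝ :=
  q * triCDF ((∑ k ∈ Ico (t / ℓ * ℓ) t, δ k) / η') +
    (1 - q) * triCDF ((∑ k ∈ range (t / ℓ * ℓ), δ k) / η)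

lemma posPart_sum_le_of_potential_step {R : ℕ → ℝ → ℝ} (hs : 0 < s)
    (hstep : ∀ k < n, ∀ x,
      s * triPotential ((x + d k) / s) - s * triPotential (x / s) ≤ R k x + c) :
    (∑ k ∈ range n, d k)⁺ ≤ ∑ k ∈ range n, R k (∑ j ∈ range k, d j) + (s / 6 + n * c) := by
  set Φ : ℕ → ℝ := fun k ↦ s * triPotential ((∑ j ∈ range k, d j) / s) with hΦ
  calc (∑ k ∈ range n, d k)⁺ = s * ((∑ k ∈ range n, d k) / s)⁺ := by
        rw [posPart_div_of_pos hs, mul_div_cancel₀ _ hs.ne']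
    _ ≤ Φ n := mul_le_mul_of_nonneg_left (posPart_le_triPotential _) hs.le
    _ = ∑ k ∈ range n, (Φ (k + 1) - Φ k) + Φ 0 := by rw [sum_range_sub, sub_add_cancel]
    _ ≤ ∑ k ∈ range n, (R k (∑ j ∈ range k, d j) + c) + s / 6 := by
        gcongr with k hk
        · simp only [hΦ, sum_range_succ]
          exact hstep k (mem_range.1 hk) _
        · simp [hΦ, triPotential_zero, div_eq_mul_inv]
    _ = _ := by rw [sum_add_distrib, sum_const, card_range, nsmul_eq_mul]; ring

lemma posPart_sum_le_fpl (hs : 0 < s) (hd : ∀ k < n, |d k| ≤ 1) :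
    (∑ k ∈ range n, d k)⁺ ≤
      ∑ k ∈ range n, d k * triCDF ((∑ j ∈ range k, d j) / s) + (s / 6 + n * (1 / (2 * s))) := by
  refine posPart_sum_le_of_potential_step (R := fun k x ↦ d k * triCDF (x / s)) hs fun k hk x ↦ ?_
  have htaylor := (abs_le.1 (abs_triPotential_taylor_one_le (x / s) (d k / s))).2
  have hsq : |d k| ^ 2 ≤ 1 := pow_le_one₀ (abs_nonneg _) (hd k hk)
  calc s * triPotential ((x + d k) / s) - s * triPotential (x / s)
      = s * (triPotential (x / s + d k / s) - triPotential (x / s)) := by rw [add_div, mul_sub]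
    _ ≤ s * (d k / s * triCDF (x / s) + |d k / s| ^ 2 / 2) := by gcongr; linarith
    _ = d k * triCDF (x / s) + |d k| ^ 2 / (2 * s) := by
        rw [abs_div, abs_of_pos hs]; field_simp
    _ ≤ d k * triCDF (x / s) + 1 / (2 * s) := by gcongr

lemma posPart_sum_le_mix (hs : 0 < s) (hq : 0 < q) (hq1 : q ≤ 1) (hd : ∀ k < n, |d k| ≤ m) :
    (∑ k ∈ range n, d k)⁺ ≤
      ∑ k ∈ range n, (q * (d k)⁺ + (1 - q) * (d k * triCDF ((∑ j ∈ range k, d j) / s))) +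
        (s / 6 + n * (m ^ 3 / (3 * q * s ^ 2))) := by
  refine posPart_sum_le_of_potential_step
    (R := fun k x ↦ q * (d k)⁺ + (1 - q) * (d k * triCDF (x / s))) hs fun k hk x ↦ ?_
  have hmix := triPotential_add_sub_le_mix hq hq1 (x / s) (d k / s)
  have hcube : |d k| ^ 3 ≤ m ^ 3 := by gcongr; exact hd k hk
  calc s * triPotential ((x + d k) / s) - s * triPotential (x / s)
      = s * (triPotential (x / s + d k / s) - triPotential (x / s)) := by rw [add_div, mul_sub]
    _ ≤ s * (q * (d k / s)⁺ + (1 - q) * (d k / s * triCDF (x / s)) + |d k / s| ^ 3 / (3 * q)) := by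
        gcongr
    _ = q * (d k)⁺ + (1 - q) * (d k * triCDF (x / s)) + |d k| ^ 3 / (3 * q * s ^ 2) := by
        rw [abs_div, abs_of_pos hs, posPart_div_of_pos hs]; field_simp
    _ ≤ _ := by gcongr

lemma sum_range_mul {M : Type*} [AddCommMonoid M] (f : ℕ → M) (b ℓ : ℕ) :
    ∑ t ∈ range (b * ℓ), f t = ∑ i ∈ range b, ∑ j ∈ range ℓ, f (i * ℓ + j) := by
  induction b with
  | zero => simp
  | succ b ih => rw [sum_range_succ, ← ih, Nat.succ_mul, sum_range_add]

lemma sum_block_dfplProb (i : ℕ) :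
    ∑ j ∈ range ℓ, δ (i * ℓ + j) * dfplProb ℓ q η' η δ (i * ℓ + j) =
      q * ∑ j ∈ range ℓ, δ (i * ℓ + j) * triCDF ((∑ k ∈ range j, δ (i * ℓ + k)) / η') +
      (1 - q) * ((∑ j ∈ range ℓ, δ (i * ℓ + j)) *
        triCDF ((∑ k ∈ range i, ∑ j ∈ range ℓ, δ (k * ℓ + j)) / η)) := by
  rw [sum_mul, mul_sum, mul_sum, ← sum_add_distrib, ← sum_range_mul]
  refine sum_congr rfl fun j hj ↦ ?_
  have hblock : (i * ℓ + j) / ℓ = i := by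
    rw [mul_comm, Nat.mul_add_div (pos_of_gt (mem_range.1 hj)),
      Nat.div_eq_of_lt (mem_range.1 hj), add_zero]
  rw [dfplProb, hblock, sum_Ico_eq_sum_range, Nat.add_sub_cancel_left]
  ring

lemma posPart_sum_le_dfplProb (hη : 0 < η) (hη' : 0 < η') (hq : 0 < q) (hq1 : q ≤ 1)
    (hδ : ∀ t < b * ℓ, |δ t| ≤ 1) :
    (∑ t ∈ range (b * ℓ), δ t)⁺ ≤
      ∑ t ∈ range (b * ℓ), δ t * dfplProb ℓ q η' η δ t +
        (η / 6 + b * (ℓ ^ 3 / (3 * q * η ^ 2)) + b * (q * (η' / 6 + ℓ * (1 / (2 * η'))))) := by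
  have hδ_block : ∀ i < b, ∀ j < ℓ, |δ (i * ℓ + j)| ≤ 1 := fun i hi j hj ↦ hδ _ <|
    calc i * ℓ + j < (i + 1) * ℓ := by rw [add_one_mul]; gcongr
      _ ≤ b * ℓ := by gcongr; exact hi
  set d : ℕ → ℝ := fun i ↦ ∑ j ∈ range ℓ, δ (i * ℓ + j)
  have hd_le : ∀ i < b, |d i| ≤ ℓ := fun i hi ↦
    calc |d i| ≤ ∑ j ∈ range ℓ, |δ (i * ℓ + j)| := abs_sum_le_sum_abs _ _
      _ ≤ ∑ _j ∈ range ℓ, (1 : ℝ) := sum_le_sum fun j hj ↦ hδ_block i hi j (mem_range.1 hj)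
      _ = ℓ := by simp
  have hstep_phase : ∀ i ∈ range b,
      q * (d i)⁺ + (1 - q) * (d i * triCDF ((∑ k ∈ range i, d k) / η)) ≤
        ∑ j ∈ range ℓ, δ (i * ℓ + j) * dfplProb ℓ q η' η δ (i * ℓ + j) +
          q * (η' / 6 + ℓ * (1 / (2 * η'))) := fun i hi ↦ by
    have hfpl := posPart_sum_le_fpl hη' (hδ_block i (mem_range.1 hi))
    rw [sum_block_dfplProb]
    linarith [mul_le_mul_of_nonneg_left hfpl hq.le]
  calc (∑ t ∈ range (b * ℓ), δ t)⁺ = (∑ i ∈ range b, d i)⁺ := by rw [sum_range_mul]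
    _ ≤ _ := posPart_sum_le_mix hη hq hq1 hd_le
    _ ≤ _ := add_le_add_left (sum_le_sum hstep_phase) _
    _ = _ := by
        rw [sum_add_distrib, ← sum_range_mul (fun t ↦ δ t * dfplProb ℓ q η' η δ t), sum_const,
          card_range, nsmul_eq_mul]
        ring

end Deterministic

section Noise

variable {η : ℝ}

lemma isProbabilityMeasure_uniformIcc (hη : 0 < η) : IsProbabilityMeasure (uniformIcc η) where
  measure_univ := by
    rw [uniformIcc, Measure.smul_apply, Measure.restrict_apply_univ, Real.volume_Icc, sub_zero,
      smul_eq_mul, ENNReal.inv_mul_cancel (by simpa using hη) ENNReal.ofReal_ne_top]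

lemma isProbabilityMeasure_uniformSq (hη : 0 < η) : IsProbabilityMeasure (uniformSq η) := by
  have := isProbabilityMeasure_uniformIcc hη
  unfold uniformSq
  infer_instance

lemma integral_uniformIcc (hη : 0 ≤ η) (f : ℝ → ℝ) :
    ∫ x, f x ∂uniformIcc η = η⁻¹ * ∫ x in (0 : ℝ)..η, f x := by
  rw [uniformIcc, integral_smul_measure, intervalIntegral.integral_of_le hη,
    integral_Icc_eq_integral_Ioc, ENNReal.toReal_inv, ENNReal.toReal_ofReal hη, smul_eq_mul]

lemma uniformIcc_real_Iio (hη : 0 ≤ η) (c : ℝ) :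
    (uniformIcc η).real (Set.Iio c) = (c⁺ - (c - η)⁺) / η := by
  have hlength : max (min η c - 0) 0 = c⁺ - (c - η)⁺ := by
    rcases posPart_cases c with ⟨hc, ec⟩ | ⟨hc, ec⟩ <;>
      rcases posPart_cases (c - η) with ⟨hcη, ecη⟩ | ⟨hcη, ecη⟩ <;>
      rcases min_cases η c with ⟨em, hm⟩ | ⟨em, hm⟩ <;>
      rw [ec, ecη, em, sub_zero] <;> rw [max_def] <;> split_ifs <;> linarith
  rw [uniformIcc, Measure.restrict_congr_set Ico_ae_eq_Icc.symm, measureReal_ennreal_smul_apply,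
    measureReal_restrict_apply measurableSet_Iio, Set.inter_comm, Set.Ico_inter_Iio,
    Real.volume_real_Ico, hlength, ENNReal.toReal_inv, ENNReal.toReal_ofReal hη, inv_mul_eq_div]

/-- The expert that FPL follows in a game with two experts, given their cumulative payoffs `x` and
the perturbation `r`. -/
noncomputable def perturbedLeader (x r : Fin 2 → ℝ) : Fin 2 :=
  if x 0 + r 0 > x 1 + r 1 then 0 else 1

lemma measurable_perturbedLeader (x : Fin 2 → ℝ) : Measurable (perturbedLeader x) :=
  Measurable.ite (measurableSet_lt (by fun_prop) (by fun_prop)) measurable_const measurable_const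

lemma integral_uniformIcc_posPart_sub (hη : 0 < η) (x : ℝ) :
    ∫ u, ((x + u)⁺ - (x + u - η)⁺) / η ∂uniformIcc η = triCDF (x / η) := by
  have hsq (c u : ℝ) : HasDerivAt (fun u ↦ (c + u)⁺ ^ 2) (2 * (c + u)⁺) u := by
    simpa using (hasDerivAt_posPart_pow 0 (c + u)).comp_const_add c u
  have hderiv (u : ℝ) : HasDerivAt (fun u ↦ ((x + u)⁺ ^ 2 - (x - η + u)⁺ ^ 2) / (2 * η))
      (((x + u)⁺ - (x + u - η)⁺) / η) u := by
    refine (((hsq x u).sub (hsq (x - η) u)).div_const (2 * η)).congr_deriv ?_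
    rw [sub_add_eq_add_sub]
    field_simp
  have hcont : Continuous fun u : ℝ ↦ ((x + u)⁺ - (x + u - η)⁺) / η := by
    have := continuous_posPart (α := ℝ)
    fun_prop
  rw [integral_uniformIcc hη.le, intervalIntegral.integral_eq_sub_of_hasDerivAt
    (fun u _ ↦ hderiv u) (hcont.intervalIntegrable _ _), triCDF, div_add_one hη.ne',
    div_sub_one hη.ne', posPart_div_of_pos hη, posPart_div_of_pos hη, posPart_div_of_pos hη]
  simp only [add_zero, sub_add_cancel]
  field_simp
  ring

lemma uniformSq_real_perturbedLeader_eq_zero (hη : 0 < η) (x : Fin 2 → ℝ) :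
    (uniformSq η).real {r | perturbedLeader x r = 0} = triCDF ((x 0 - x 1) / η) := by
  have := isProbabilityMeasure_uniformIcc hη
  have hset : {r | perturbedLeader x r = 0} =
      MeasurableEquiv.piFinTwo (fun _ ↦ ℝ) ⁻¹' {z : ℝ × ℝ | z.2 < x 0 - x 1 + z.1} := by
    ext r
    simp only [perturbedLeader, Set.mem_ofPred_eq, Set.mem_preimage,
      MeasurableEquiv.piFinTwo_apply, ite_eq_left_iff, one_ne_zero, imp_false, not_not]
    constructor <;> intro h <;> linarith
  have hmeas : MeasurableSet {z : ℝ × ℝ | z.2 < x 0 - x 1 + z.1} :=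
    measurableSet_lt (by fun_prop) (by fun_prop)
  rw [hset, uniformSq, (measurePreserving_piFinTwo fun _ ↦ uniformIcc η).measureReal_preimage
    hmeas.nullMeasurableSet, ← integral_indicator_one hmeas,
    integral_prod _ ((integrable_const 1).indicator hmeas), ← integral_uniformIcc_posPart_sub hη]
  refine integral_congr_ae (.of_forall fun u ↦ ?_)
  exact (integral_indicator_one (s := Set.Iio (x 0 - x 1 + u)) measurableSet_Iio).trans
    (uniformIcc_real_Iio hη.le _)

lemma integral_perturbedLeader (hη : 0 < η) (x v : Fin 2 → ℝ) :
    ∫ r, v (perturbedLeader x r) ∂uniformSq η =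
      v 1 + (v 0 - v 1) * triCDF ((x 0 - x 1) / η) := by
  have := isProbabilityMeasure_uniformSq hη
  have hmeas : MeasurableSet {r | perturbedLeader x r = 0} :=
    measurable_perturbedLeader x (measurableSet_singleton 0)
  have hpayoff (r) : v (perturbedLeader x r) =
      v 1 + {r | perturbedLeader x r = 0}.indicator (fun _ ↦ v 0 - v 1) r := by
    simp only [Set.indicator_apply, Set.mem_ofPred_eq]
    split_ifs with h
    · rw [h]; ring
    · rw [Fin.eq_one_of_ne_zero _ h, add_zero]
  simp only [hpayoff]
  rw [integral_add (integrable_const _) ((integrable_const _).indicator hmeas), integral_const,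
    integral_indicator_const _ hmeas, probReal_univ, one_smul, smul_eq_mul, mul_comm,
    uniformSq_real_perturbedLeader_eq_zero hη]

end Noise

section DFPL

variable {b ℓ : ℕ} {q η' η : ℝ}

lemma isProbabilityMeasure_bernoulliBool (hq : 0 ≤ q) (hq1 : q ≤ 1) :
    IsProbabilityMeasure (bernoulliBool q) where
  measure_univ := by
    simp [bernoulliBool, ← ENNReal.ofReal_add hq (sub_nonneg.2 hq1)]

lemma integral_bernoulliBool (hq : 0 ≤ q) (hq1 : q ≤ 1) (f : Bool → ℝ) :
    ∫ y, f y ∂bernoulliBool q = q * f true + (1 - q) * f false := by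
  have := isProbabilityMeasure_bernoulliBool hq hq1
  rw [integral_fintype .of_finite]
  simp [bernoulliBool, measureReal_def, hq, hq1]

lemma isProbabilityMeasure_DFPLMeasure (hq : 0 ≤ q) (hq1 : q ≤ 1) (hη' : 0 < η') (hη : 0 < η) :
    IsProbabilityMeasure (DFPLMeasure b ℓ q η' η) := by
  have := isProbabilityMeasure_bernoulliBool hq hq1
  have := isProbabilityMeasure_uniformSq hη'
  have := isProbabilityMeasure_uniformSq hη
  unfold DFPLMeasure
  infer_instance

lemma integral_DFPLMeasure_ite (hq : 0 ≤ q) (hq1 : q ≤ 1) (hη' : 0 < η') (hη : 0 < η)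
    (i : Fin b) (k : Fin b × Fin ℓ) {f g : (Fin 2 → ℝ) → ℝ} (hf : Measurable f)
    (hg : Measurable g)
    (hintegrable : Integrable (fun ω ↦ if ω.1 i = true then f (ω.2.1 k) else g (ω.2.2 i))
      (DFPLMeasure b ℓ q η' η)) :
    ∫ ω, (if ω.1 i = true then f (ω.2.1 k) else g (ω.2.2 i)) ∂DFPLMeasure b ℓ q η' η =
      q * ∫ r, f r ∂uniformSq η' + (1 - q) * ∫ r, g r ∂uniformSq η := by
  have := isProbabilityMeasure_bernoulliBool hq hq1
  have := isProbabilityMeasure_uniformSq hη'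
  have := isProbabilityMeasure_uniformSq hη
  have hcoin (y : Bool) :
      ∫ r : (Fin b × Fin ℓ → Fin 2 → ℝ) × (Fin b → Fin 2 → ℝ),
        (if y = true then f (r.1 k) else g (r.2 i))
        ∂(Measure.pi fun _ ↦ uniformSq η').prod (Measure.pi fun _ ↦ uniformSq η) =
      if y = true then ∫ r, f r ∂uniformSq η' else ∫ r, g r ∂uniformSq η := by
    split_ifs
    · rw [integral_fun_fst fun r : Fin b × Fin ℓ → Fin 2 → ℝ ↦ f (r k), probReal_univ, one_smul,
        integral_comp_eval hf.aestronglyMeasurable]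
    · rw [integral_fun_snd fun r : Fin b → Fin 2 → ℝ ↦ g (r i), probReal_univ, one_smul,
        integral_comp_eval hg.aestronglyMeasurable]
  rw [DFPLMeasure, integral_prod _ hintegrable]
  simp only [hcoin]
  rw [integral_comp_eval (μ := fun _ : Fin b ↦ bernoulliBool q)
    (f := fun y ↦ if y = true then ∫ r, f r ∂uniformSq η' else ∫ r, g r ∂uniformSq η)
    (measurable_of_finite _).aestronglyMeasurable, integral_bernoulliBool hq hq1]
  simp

/-- The expert that DFPL follows at time `t`, as a function of the random draws. The step-phase
perturbation used at time `t` is the one with index `κ t`; in the paper, this index consists of the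
block of `t` and the position of `t` in its block. -/
noncomputable def dfplExpert (p : Fin (b * ℓ) → Fin 2 → ℝ) (κ : Fin (b * ℓ) → Fin b × Fin ℓ)
    (t : Fin (b * ℓ)) (ω : DFPLSpace b ℓ) : Fin 2 :=
  if ω.1 t.divNat = true then
    perturbedLeader (fun i ↦ ∑ τ ∈ univ.filter (fun τ ↦ τ.divNat = t.divNat ∧ τ < t), p τ i)
      (ω.2.1 (κ t))
  else
    perturbedLeader (fun i ↦ ∑ τ ∈ univ.filter (fun τ ↦ τ.divNat < t.divNat), p τ i)
      (ω.2.2 t.divNat)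

variable {p : Fin (b * ℓ) → Fin 2 → ℝ} {δ : ℕ → ℝ}

lemma measurable_dfplExpert (κ : Fin (b * ℓ) → Fin b × Fin ℓ) (t : Fin (b * ℓ)) :
    Measurable (dfplExpert p κ t) :=
  Measurable.ite (measurableSet_eq_fun (by fun_prop) measurable_const)
    ((measurable_perturbedLeader _).comp (by fun_prop))
    ((measurable_perturbedLeader _).comp (by fun_prop))

lemma sum_fin_filter_val_mem {M : Type*} [AddCommMonoid M] {n : ℕ} {s : Finset ℕ}
    (hs : ∀ m ∈ s, m < n) (f : ℕ → M) : ∑ τ : Fin n with ↑τ ∈ s, f τ = ∑ m ∈ s, f m := by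
  rw [sum_filter, Fin.sum_univ_eq_sum_range (fun m ↦ if m ∈ s then f m else 0), ← sum_filter,
    filter_mem_eq_inter, inter_eq_right.2 fun m hm ↦ mem_range.2 (hs m hm)]

lemma sum_filter_divNat_lt {M : Type*} [AddCommMonoid M] (f : ℕ → M) (t : Fin (b * ℓ)) :
    ∑ τ : Fin (b * ℓ) with τ.divNat < t.divNat, f τ = ∑ m ∈ range (t / ℓ * ℓ), f m := by
  have hℓ : 0 < ℓ := Nat.pos_of_mul_pos_left t.pos
  have hmem (τ : Fin (b * ℓ)) : τ.divNat < t.divNat ↔ (τ : ℕ) ∈ range (t / ℓ * ℓ) := by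
    rw [Fin.lt_def, Fin.coe_divNat, Fin.coe_divNat, Nat.div_lt_iff_lt_mul hℓ, mem_range]
  simp only [hmem]
  exact sum_fin_filter_val_mem
    (fun m hm ↦ (mem_range.1 hm).trans_le ((Nat.div_mul_le_self _ _).trans t.is_lt.le)) f

lemma sum_filter_divNat_eq {M : Type*} [AddCommMonoid M] (f : ℕ → M) (t : Fin (b * ℓ)) :
    ∑ τ : Fin (b * ℓ) with τ.divNat = t.divNat ∧ τ < t, f τ = ∑ m ∈ Ico (t / ℓ * ℓ) t, f m := by
  have hℓ : 0 < ℓ := Nat.pos_of_mul_pos_left t.pos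
  have hmem (τ : Fin (b * ℓ)) :
      τ.divNat = t.divNat ∧ τ < t ↔ (τ : ℕ) ∈ Ico (t / ℓ * ℓ : ℕ) t := by
    rw [Fin.ext_iff, Fin.coe_divNat, Fin.coe_divNat, Fin.lt_def, mem_Ico,
      ← Nat.le_div_iff_mul_le hℓ]
    exact and_congr_left fun hlt ↦ ⟨Eq.ge, (Nat.div_le_div_right hlt.le).antisymm⟩
  simp only [hmem]
  exact sum_fin_filter_val_mem (fun m hm ↦ (mem_Ico.1 hm).2.trans t.is_lt) f

lemma integrable_payoff_dfplExpert [IsFiniteMeasure (DFPLMeasure b ℓ q η' η)]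
    (κ : Fin (b * ℓ) → Fin b × Fin ℓ) (t : Fin (b * ℓ)) (v : Fin 2 → ℝ) :
    Integrable (fun ω ↦ v (dfplExpert p κ t ω)) (DFPLMeasure b ℓ q η' η) :=
  Integrable.of_finite.comp_measurable (measurable_dfplExpert κ t)

lemma integral_payoff_dfplExpert (hq : 0 ≤ q) (hq1 : q ≤ 1) (hη' : 0 < η') (hη : 0 < η)
    (hδ : ∀ t : Fin (b * ℓ), δ t = p t 0 - p t 1) (κ : Fin (b * ℓ) → Fin b × Fin ℓ)
    (t : Fin (b * ℓ)) :
    ∫ ω, p t (dfplExpert p κ t ω) ∂DFPLMeasure b ℓ q η' η =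
      p t 1 + δ t * dfplProb ℓ q η' η δ t := by
  have := isProbabilityMeasure_DFPLMeasure (b := b) (ℓ := ℓ) hq hq1 hη' hη
  have hmeas (x : Fin 2 → ℝ) : Measurable fun r ↦ p t (perturbedLeader x r) :=
    (measurable_of_finite (p t)).comp (measurable_perturbedLeader x)
  have hintegrable := integrable_payoff_dfplExpert (p := p) (q := q) (η' := η') (η := η) κ t (p t)
  simp only [dfplExpert, apply_ite (p t)] at hintegrable ⊢
  rw [integral_DFPLMeasure_ite hq hq1 hη' hη _ _ (hmeas _) (hmeas _) hintegrable,
    integral_perturbedLeader hη', integral_perturbedLeader hη, ← sum_sub_distrib,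
    ← sum_sub_distrib]
  simp only [← hδ]
  rw [sum_filter_divNat_eq, sum_filter_divNat_lt, dfplProb]
  ring

theorem integral_regret_dfplExpert_le (hq : 0 < q) (hq1 : q ≤ 1) (hη' : 0 < η') (hη : 0 < η)
    (hp : ∀ t, |p t 0 - p t 1| ≤ 1) (κ : Fin (b * ℓ) → Fin b × Fin ℓ) :
    ∫ ω, (max (∑ t, p t 0) (∑ t, p t 1) - ∑ t, p t (dfplExpert p κ t ω))
        ∂DFPLMeasure b ℓ q η' η ≤
      η / 6 + b * (ℓ ^ 3 / (3 * q * η ^ 2)) + b * (q * (η' / 6 + ℓ * (1 / (2 * η')))) := by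
  have := isProbabilityMeasure_DFPLMeasure (b := b) (ℓ := ℓ) hq.le hq1 hη' hη
  set δ : ℕ → ℝ := Function.extend Fin.val (fun t ↦ p t 0 - p t 1) 0
  have hδ (t : Fin (b * ℓ)) : δ t = p t 0 - p t 1 := Fin.val_injective.extend_apply _ _ t
  have hδ_le : ∀ t < b * ℓ, |δ t| ≤ 1 := fun t ht ↦ (hδ ⟨t, ht⟩).symm ▸ hp ⟨t, ht⟩
  have hbest : max (∑ t, p t 0) (∑ t, p t 1) =
      ∑ t, p t 1 + (∑ t ∈ range (b * ℓ), δ t)⁺ := by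
    rw [← Fin.sum_univ_eq_sum_range]
    simp only [hδ, sum_sub_distrib]
    rw [posPart_def, ← max_add_add_left, add_sub_cancel, add_zero]
  rw [integral_sub (integrable_const _)
      (integrable_finsetSum _ fun t _ ↦ integrable_payoff_dfplExpert κ t (p t)),
    integral_const, probReal_univ, one_smul,
    integral_finsetSum _ fun t _ ↦ integrable_payoff_dfplExpert κ t (p t),
    sum_congr rfl fun t _ ↦ integral_payoff_dfplExpert hq.le hq1 hη' hη hδ κ t, sum_add_distrib,
    Fin.sum_univ_eq_sum_range (fun t ↦ δ t * dfplProb ℓ q η' η δ t), hbest]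
  linarith [posPart_sum_le_dfplProb hη hη' hq hq1 hδ_le]

end DFPL

lemma dfpl_parameter_bound {ℓ b : ℕ} (hℓ : 0 < ℓ) (hb : 0 < b) {T η q : ℝ} (hT : T = b * ℓ)
    (hη : η = (ℓ : ℝ) ^ ((5 : ℝ) / 12) * T ^ ((1 : ℝ) / 2))
    (hq : q = 2 * (ℓ : ℝ) ^ 3 * T ^ 2 / η ^ 5) :
    η / 6 + b * (ℓ ^ 3 / (3 * q * η ^ 2)) + b * (q * (√ℓ / 6 + ℓ * (1 / (2 * √ℓ)))) ≤ 2 * η := by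
  have hℓ_pos : (0 : ℝ) < ℓ := by positivity
  have hT_pos : 0 < T := by rw [hT]; positivity
  have hη_pos : 0 < η := by rw [hη]; positivity
  have hη_sq : η ^ 2 = (ℓ : ℝ) ^ ((5 : ℝ) / 6) * T := by
    rw [hη, mul_pow, ← Real.rpow_mul_natCast hℓ_pos.le, ← Real.rpow_mul_natCast hT_pos.le]
    norm_num
  have hη_sq_le : η ^ 2 ≤ ℓ * T := by
    rw [hη_sq]
    gcongr
    exact Real.rpow_le_self_of_one_le (by exact_mod_cast hℓ) (by norm_num)
  have hη_six : η ^ 6 = (ℓ : ℝ) ^ 2 * √ℓ * T ^ 3 := by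
    rw [pow_mul η 2 3, hη_sq, mul_pow, ← Real.rpow_mul_natCast hℓ_pos.le, Real.sqrt_eq_rpow,
      ← Real.rpow_natCast (ℓ : ℝ) 2, ← Real.rpow_add hℓ_pos]
    norm_num
  have hblock : b * (ℓ ^ 3 / (3 * q * η ^ 2)) ≤ η / 6 :=
    calc b * (ℓ ^ 3 / (3 * q * η ^ 2)) = η / 6 * (η ^ 2 / (ℓ * T)) := by
          rw [hq, hT]; field_simp; norm_num
      _ ≤ η / 6 := mul_le_of_le_one_right (by positivity)
          (div_le_one_of_le₀ hη_sq_le (by positivity))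
  have hstep : b * (q * (√ℓ / 6 + ℓ * (1 / (2 * √ℓ)))) = 4 / 3 * η :=
    calc b * (q * (√ℓ / 6 + ℓ * (1 / (2 * √ℓ)))) = b * q * (2 / 3 * √ℓ) := by
          rw [mul_one_div, div_mul_eq_div_div_swap, Real.div_sqrt]; ring
      _ = 4 / 3 * ((ℓ : ℝ) ^ 2 * √ℓ * T ^ 3) / η ^ 5 := by rw [hq, hT]; ring
      _ = 4 / 3 * η := by rw [← hη_six]; field_simp
  linarith

/-- **Expected regret of DFPL (Lemma 3 of the paper).**
There is a universal constant `C > 0` (independent of `ℓ`, `b`, `T` and of the payoff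
sequence) such that for any payoffs `p^1, …, p^T ∈ [0,1]²` with `T = bℓ`, running
DFPL(T, ℓ, η) with `η = ℓ^{5/12}·T^{1/2}`, step-phase noise `η' = √ℓ` and step-phase
probability `q = 2ℓ³T²/η⁵ ≤ 1`, the expected regret is at most
`C·ℓ^{5/12}·√T = C·√(ℓ^{5/6}·T)`.  Here expert 1 is index `0` and expert 2 is
index `1`; block indices are zero-based, so time `t ∈ {0, …, T−1}` lies in block
`t / ℓ` at within-block position `t % ℓ`; in a step phase (coin `true`) FPL(η') is run
restarted on the block, and in a block phase (coin `false`) the single perturbed leader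
with respect to the cumulative payoffs of the previous blocks is played throughout the
block. -/
theorem dfpl_expected_regret :
    ∃ C : ℝ, 0 < C ∧
      ∀ (ℓ b T : ℕ), 0 < ℓ → 0 < b → T = b * ℓ →
      ∀ (p : Fin T → Fin 2 → ℝ), (∀ t i, p t i ∈ Set.Icc (0 : ℝ) 1) →
      ∀ (η η' q : ℝ),
        η = (ℓ : ℝ) ^ ((5 : ℝ) / 12) * (T : ℝ) ^ ((1 : ℝ) / 2) →
        η' = Real.sqrt ℓ →
        q = 2 * (ℓ : ℝ) ^ 3 * (T : ℝ) ^ 2 / η ^ 5 →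
        q ≤ 1 →
      ∀ (blk : Fin T → Fin b), (∀ t, (blk t : ℕ) = (t : ℕ) / ℓ) →
      ∀ (pos : Fin T → Fin ℓ), (∀ t, (pos t : ℕ) = (t : ℕ) % ℓ) →
      ∀ (a : Fin T → DFPLSpace b ℓ → Fin 2),
        (∀ t ω, a t ω =
          if ω.1 (blk t) = true then
            (if (∑ τ ∈ univ.filter (fun τ : Fin T => blk τ = blk t ∧ τ < t), p τ 0)
                  + ω.2.1 (blk t, pos t) 0 >
                (∑ τ ∈ univ.filter (fun τ : Fin T => blk τ = blk t ∧ τ < t), p τ 1)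
                  + ω.2.1 (blk t, pos t) 1
             then 0 else 1)
          else
            (if (∑ τ ∈ univ.filter (fun τ : Fin T => blk τ < blk t), p τ 0)
                  + ω.2.2 (blk t) 0 >
                (∑ τ ∈ univ.filter (fun τ : Fin T => blk τ < blk t), p τ 1)
                  + ω.2.2 (blk t) 1
             then 0 else 1)) →
        ∫ ω, (max (∑ t, p t 0) (∑ t, p t 1) - ∑ t, p t (a t ω))
            ∂(DFPLMeasure b ℓ q η' η) ≤
          C * (ℓ : ℝ) ^ ((5 : ℝ) / 12) * Real.sqrt T := by
  refine ⟨2, two_pos, ?_⟩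
  rintro ℓ b _ hℓ hb rfl p hp η η' q hη rfl hq hq1 blk hblk pos - a ha
  obtain rfl : blk = Fin.divNat := funext fun t ↦ Fin.ext (by rw [hblk, Fin.coe_divNat])
  obtain rfl : a = dfplExpert p fun t ↦ (t.divNat, pos t) := by
    ext t ω : 2
    exact ha t ω
  have hη_pos : 0 < η := by rw [hη]; positivity
  have hq_pos : 0 < q := by rw [hq]; positivity
  have hp_sub (t) : |p t 0 - p t 1| ≤ 1 := by
    simpa [Real.dist_eq] using Real.dist_le_of_mem_Icc (hp t 0) (hp t 1)
  calc _ ≤ _ := integral_regret_dfplExpert_le hq_pos hq1 (by positivity) hη_pos hp_sub _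
    _ ≤ 2 * η := dfpl_parameter_bound hℓ hb (Nat.cast_mul b ℓ) hη hq
    _ = _ := by rw [hη, Real.sqrt_eq_rpow, mul_assoc]
end
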